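/- arXiv:2405.10894 — 2 statements merged into one kernel-verified Lean document; each statement's English description precedes it below -/
import Mathlib

section
/- Let Q be a finite set and let M be a submonoid of the monoid of all functions Q → Q under composition. Then M satisfies: for all f,g ∈ M, M∘(f∘g)∘M = M∘f∘M or M∘(f∘g)∘M = M∘g∘M (bilateral ideals taken inside M), if and only if M is totally ordered by the relation f ⊑ g defined by range(f) ⊆ range(f ∘ g). -/
/-- The bilateral ideal `MmM = {x·m·y : x,y ∈ M}` of an element `m` of a monoid `M`. -/
def bIdeal (M : Type) [Monoid M] (m : M) : Set M := {z | ∃ x y : M, z = x * m * y}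

/-! If `f = x(fg)y`, iterating gives `f = xⁿ f (gy)ⁿ` for all `n`; once the chain of right ideals
generated by the powers of `gy` stabilises, `f` is a right multiple of `fg`, so
`range f ⊆ range (fg)`. Conversely, if `range f ⊆ range h` for `h = fg` and
`range h ⊆ range h²`, then every value of `f` is a value of `hⁿ` for all `n`; once the chain of
left ideals generated by the powers of `h` stabilises, some multiple `wh` of `h` fixes all these
values, so `f = whf` lies in the bilateral ideal of `fg`. -/

/-- Strong π-regularity, a generalisation of finiteness: for every `a`, both chains of principal
ideals `M ⊇ aM ⊇ a²M ⊇ ⋯` and `M ⊇ Ma ⊇ Ma² ⊇ ⋯` stabilise. The relation `∣` of a noncommutative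
monoid is divisibility on the left, `a ∣ b ↔ b ∈ aM`. -/
structure IsStronglyPiRegular (M : Type*) [Monoid M] : Prop where
  exists_pow_succ_dvd_pow (a : M) : ∃ n : ℕ, a ^ (n + 1) ∣ a ^ n
  exists_pow_eq_mul_pow_succ (a : M) : ∃ (n : ℕ) (w : M), a ^ n = w * a ^ (n + 1)

section Monoid

variable {M : Type*} [Monoid M]

theorem exists_pow_eq_pow_add_succ [Finite M] (a : M) : ∃ n k : ℕ, a ^ n = a ^ (n + k + 1) := by
  obtain ⟨m, n, hne, heq⟩ := Finite.exists_ne_map_eq_of_infinite (a ^ · : ℕ → M)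
  wlog hlt : m < n generalizing m n
  · exact this n m hne.symm heq.symm (by omega)
  obtain ⟨k, rfl⟩ := Nat.exists_eq_add_of_lt hlt
  exact ⟨m, k, heq⟩

theorem IsStronglyPiRegular.of_finite [Finite M] : IsStronglyPiRegular M where
  exists_pow_succ_dvd_pow a := by
    obtain ⟨n, k, h⟩ := exists_pow_eq_pow_add_succ a
    exact ⟨n, a ^ k, by rw [← pow_add, Nat.add_right_comm, ← h]⟩
  exists_pow_eq_mul_pow_succ a := by
    obtain ⟨n, k, h⟩ := exists_pow_eq_pow_add_succ a
    exact ⟨n, a ^ k, by rw [← pow_add, ← add_assoc, Nat.add_comm k n, ← h]⟩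

theorem eq_pow_mul_mul_pow {a x y : M} (h : a = x * a * y) (n : ℕ) :
    a = x ^ n * a * y ^ n := by
  induction n with
  | zero => simp
  | succ n ih =>
    calc a = x ^ n * (x * a * y) * y ^ n := by rwa [← h]
      _ = x ^ (n + 1) * a * y ^ (n + 1) := by rw [pow_succ x, pow_succ' y]; simp only [mul_assoc]

theorem dvd_of_eq_mul_mul {a b x y : M} (h : a = x * (a * b) * y)
    (hpow : ∃ n : ℕ, (b * y) ^ (n + 1) ∣ (b * y) ^ n) : a * b ∣ a := by
  obtain ⟨n, w, hw⟩ := hpow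
  have hiter : a = x ^ n * a * (b * y) ^ n :=
    eq_pow_mul_mul_pow (by simpa only [mul_assoc] using h) n
  refine ⟨y * w, ?_⟩
  calc a = x ^ n * a * ((b * y) ^ (n + 1) * w) := by rwa [← hw]
    _ = x ^ n * a * (b * y) ^ n * (b * y * w) := by rw [pow_succ]; simp only [mul_assoc]
    _ = a * b * (y * w) := by rw [← hiter]; simp only [mul_assoc]

end Monoid

section BIdeal

variable {M : Type} [Monoid M] {a b : M}

theorem mem_bIdeal_self (a : M) : a ∈ bIdeal M a := ⟨1, 1, by simp⟩

theorem bIdeal_subset_bIdeal_iff : bIdeal M a ⊆ bIdeal M b ↔ a ∈ bIdeal M b := by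
  refine ⟨fun h => h (mem_bIdeal_self a), ?_⟩
  rintro ⟨x, y, rfl⟩ _ ⟨u, v, rfl⟩
  exact ⟨u * x, y * v, by simp only [mul_assoc]⟩

theorem bIdeal_mul_subset_left (a b : M) : bIdeal M (a * b) ⊆ bIdeal M a :=
  bIdeal_subset_bIdeal_iff.2 ⟨1, b, by rw [one_mul]⟩

theorem bIdeal_mul_subset_right (a b : M) : bIdeal M (a * b) ⊆ bIdeal M b :=
  bIdeal_subset_bIdeal_iff.2 ⟨a, 1, by rw [mul_one]⟩

theorem bIdeal_mul_eq_left_iff : bIdeal M (a * b) = bIdeal M a ↔ a ∈ bIdeal M (a * b) := by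
  rw [← bIdeal_subset_bIdeal_iff, Set.Subset.antisymm_iff,
    and_iff_right (bIdeal_mul_subset_left a b)]

theorem bIdeal_mul_eq_right_iff : bIdeal M (a * b) = bIdeal M b ↔ b ∈ bIdeal M (a * b) := by
  rw [← bIdeal_subset_bIdeal_iff, Set.Subset.antisymm_iff,
    and_iff_right (bIdeal_mul_subset_right a b)]

theorem mem_bIdeal_mul_or_mem_bIdeal_mul_swap
    (h : ∀ a b : M, a ∈ bIdeal M (a * b) ∨ b ∈ bIdeal M (a * b)) (a b : M) :
    a ∈ bIdeal M (a * b) ∨ b ∈ bIdeal M (b * a) := by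
  rcases h a b with ha | hb
  · exact .inl ha
  rcases h b a with hb' | ha
  · exact .inr hb'
  · exact .inl (bIdeal_subset_bIdeal_iff.2 hb (bIdeal_mul_subset_left b a ha))

theorem mul_dvd_of_mem_bIdeal_mul (hM : IsStronglyPiRegular M) (h : a ∈ bIdeal M (a * b)) :
    a * b ∣ a := by
  obtain ⟨x, y, hxy⟩ := h
  exact dvd_of_eq_mul_mul hxy (hM.exists_pow_succ_dvd_pow (b * y))

end BIdeal

section Action

variable {M Q : Type*} [Monoid M] [MulAction M Q] {a h : M}

theorem range_smul_subset_of_dvd {b : M} (hab : a ∣ b) :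
    Set.range (b • · : Q → Q) ⊆ Set.range (a • · : Q → Q) := by
  obtain ⟨c, rfl⟩ := hab
  rintro _ ⟨q, rfl⟩
  exact ⟨c • q, smul_smul a c q⟩

theorem range_smul_subset_range_pow_smul
    (hh : Set.range (h • · : Q → Q) ⊆ Set.range ((h * h) • · : Q → Q)) (n : ℕ) :
    Set.range (h • · : Q → Q) ⊆ Set.range (h ^ n • · : Q → Q) := by
  induction n with
  | zero => rintro q -; exact ⟨q, by simp only [pow_zero, one_smul]⟩
  | succ n ih =>
    rintro _ ⟨q, rfl⟩
    obtain ⟨r, hr⟩ := hh ⟨q, rfl⟩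
    obtain ⟨s, hs⟩ := ih ⟨r, rfl⟩
    refine ⟨s, ?_⟩
    calc h ^ (n + 1) • s = h • h ^ n • s := by rw [pow_succ', mul_smul]
      _ = h • h • r := congrArg (h • ·) hs
      _ = h • q := (smul_smul h h r).trans hr

theorem exists_mul_mul_eq_of_range_subset [FaithfulSMul M Q]
    (hpow : ∃ (n : ℕ) (w : M), h ^ n = w * h ^ (n + 1))
    (ha : Set.range (a • · : Q → Q) ⊆ Set.range (h • · : Q → Q))
    (hh : Set.range (h • · : Q → Q) ⊆ Set.range ((h * h) • · : Q → Q)) :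
    ∃ w : M, w * h * a = a := by
  obtain ⟨n, w, hw⟩ := hpow
  refine ⟨w, FaithfulSMul.eq_of_smul_eq_smul fun q : Q => ?_⟩
  obtain ⟨r, hr : h ^ n • r = a • q⟩ := range_smul_subset_range_pow_smul hh n (ha ⟨q, rfl⟩)
  calc (w * h * a) • q = (w * h) • h ^ n • r := by rw [mul_smul, hr]
    _ = (w * h ^ (n + 1)) • r := by rw [smul_smul, mul_assoc, ← pow_succ']
    _ = a • q := by rw [← hw, hr]

end Action

theorem stmt2_general (M : Type) [Monoid M] (hM : IsStronglyPiRegular M)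
    (Q : Type*) [MulAction M Q] [FaithfulSMul M Q] :
    (∀ f g : M, bIdeal M (f * g) = bIdeal M f ∨ bIdeal M (f * g) = bIdeal M g)
    ↔ (∀ f g : M,
        Set.range (f • · : Q → Q) ⊆ Set.range ((f * g) • · : Q → Q) ∨
        Set.range (g • · : Q → Q) ⊆ Set.range ((g * f) • · : Q → Q)) := by
  simp only [bIdeal_mul_eq_left_iff, bIdeal_mul_eq_right_iff]
  constructor
  · intro H f g
    exact (mem_bIdeal_mul_or_mem_bIdeal_mul_swap H f g).imp
      (fun hf => range_smul_subset_of_dvd (mul_dvd_of_mem_bIdeal_mul hM hf))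
      (fun hg => range_smul_subset_of_dvd (mul_dvd_of_mem_bIdeal_mul hM hg))
  · intro H f g
    have range_sq (h : M) : Set.range (h • · : Q → Q) ⊆ Set.range ((h * h) • · : Q → Q) :=
      or_self_iff.1 (H h h)
    rcases H f g with hf | hg
    · obtain ⟨w, hw⟩ := exists_mul_mul_eq_of_range_subset
        (hM.exists_pow_eq_mul_pow_succ (f * g)) hf (range_sq _)
      exact .inl ⟨w, f, hw.symm⟩
    · obtain ⟨w, hw⟩ := exists_mul_mul_eq_of_range_subset
        (hM.exists_pow_eq_mul_pow_succ (g * f)) hg (range_sq _)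
      exact .inr ⟨w * g, 1, by simpa only [mul_assoc, mul_one] using hw.symm⟩

/-- Let `Q` be a finite set and `M` a submonoid of the monoid of all functions `Q → Q`
under composition. Then `M` satisfies: for all `f,g ∈ M`,
`M∘(f∘g)∘M = M∘f∘M` or `M∘(f∘g)∘M = M∘g∘M` (bilateral ideals taken inside `M`),
if and only if `M` is totally ordered by the relation `f ⊑ g` defined by
`range(f) ⊆ range(f ∘ g)`. -/
theorem stmt2 (Q : Type) [Fintype Q] (M : Submonoid (Function.End Q)) :
    (∀ f g : M, bIdeal M (f * g) = bIdeal M f ∨ bIdeal M (f * g) = bIdeal M g)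
    ↔ (∀ f g : M,
        Set.range (f : M).val ⊆ Set.range ((f : M) * g).val ∨
        Set.range (g : M).val ⊆ Set.range ((g : M) * f).val) := by
  have : Finite (Function.End Q) := inferInstanceAs (Finite (Q → Q))
  exact stmt2_general M .of_finite Q
end

section
/- Let M be a finite monoid such that for all x,y ∈ M, either xM ⊆ (xy)M or yM ⊆ (xy)M. Then for all x,y ∈ M there exists a natural number k ≥ 1 such that (x·y)^k·x = x or (y·x)^k·y = y. -/
/-- The right ideal `mM = {m·y : y ∈ M}` of an element `m` of a monoid `M`. -/
def rIdeal (M : Type) [Monoid M] (m : M) : Set M := {z | ∃ y : M, z = m * y}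

/-!
In a noncommutative monoid Mathlib's `b ∣ a` means `a ∈ bM`, that is, `aM ⊆ bM`. Applying the
hypothesis to `a, a` gives `a * a ∣ a`, and periodicity (finiteness of the submonoids generated by
single elements) then yields `a ^ k * a = a` for some `k ≥ 1`; hence `a ^ k` fixes every element
of `aM`.

If `x * y ∣ x`, then a power of `x * y` fixes `x`. If `x * y ∣ y`, then `x * y * (x * y) ∣ y` too,
so `y = p * (y * x) * q` for some `p, q`. Periodicity of `p` gives `p ^ k * y = y` for some
`k ≥ 1`, so `y = p ^ k * y * (x * q) ^ k = y * (x * q) ^ k`. Thus `y * x ∣ y`, and a power of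
`y * x` fixes `y`.
-/

section Periodic

variable {M : Type*} [Monoid M]

theorem pow_mul_mul_pow_eq_self {p y q : M} (h : p * y * q = y) (n : ℕ) :
    p ^ n * y * q ^ n = y := by
  induction n with
  | zero => simp
  | succ n ih =>
    calc p ^ (n + 1) * y * q ^ (n + 1) = p ^ n * (p * y * q) * q ^ n := by
          simp only [pow_succ p, pow_succ' q, mul_assoc]
      _ = y := by rw [h, ih]

theorem exists_pow_mul_eq_self_of_mul_mul_eq_self {p y q : M} [Finite (Submonoid.powers p)]
    (h : p * y * q = y) : ∃ k : ℕ, 1 ≤ k ∧ p ^ k * y = y := by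
  obtain ⟨i, j, hij, hpow⟩ : ∃ i j : ℕ, i < j ∧ p ^ i = p ^ j :=
    (Set.toFinite (Submonoid.powers p : Set M)).exists_lt_map_eq_of_forall_mem
      fun n ↦ pow_mem (Submonoid.mem_powers p) n
  have hy : p ^ i * y * q ^ i = y := pow_mul_mul_pow_eq_self h i
  refine ⟨j - i, Nat.sub_pos_of_lt hij, ?_⟩
  calc p ^ (j - i) * y = p ^ (j - i) * (p ^ i * y * q ^ i) := by rw [hy]
    _ = p ^ (j - i) * p ^ i * y * q ^ i := by simp only [mul_assoc]
    _ = y := by rw [← pow_add, Nat.sub_add_cancel hij.le, ← hpow, hy]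

theorem exists_pow_mul_eq_self_of_mul_self_dvd {a b : M} [Finite (Submonoid.powers a)]
    (ha : a * a ∣ a) (hb : a ∣ b) : ∃ k : ℕ, 1 ≤ k ∧ a ^ k * b = b := by
  obtain ⟨z, hz⟩ := ha
  obtain ⟨c, rfl⟩ := hb
  obtain ⟨k, hk, hka⟩ := exists_pow_mul_eq_self_of_mul_mul_eq_self hz.symm
  exact ⟨k, hk, by rw [← mul_assoc, hka]⟩

theorem mul_dvd_self_of_mul_mul_eq_self {p x y q : M} [Finite (Submonoid.powers p)]
    (h : p * (y * x) * q = y) : y * x ∣ y := by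
  have h' : p * y * (x * q) = y := by simpa only [mul_assoc] using h
  obtain ⟨k, hk, hky⟩ := exists_pow_mul_eq_self_of_mul_mul_eq_self h'
  have hy : y * (x * q) ^ k = y := by simpa only [hky] using pow_mul_mul_pow_eq_self h' k
  have hx : x ∣ (x * q) ^ k := (dvd_mul_right x q).trans (dvd_pow_self _ (Nat.ne_of_gt hk))
  exact (mul_dvd_mul_left y hx).trans hy.dvd

theorem stmt5_general [∀ a : M, Finite (Submonoid.powers a)]
    (hM : ∀ x y : M, x * y ∣ x ∨ x * y ∣ y) (x y : M) :
    ∃ k : ℕ, 1 ≤ k ∧ ((x * y) ^ k * x = x ∨ (y * x) ^ k * y = y) := by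
  have mul_self_dvd (a : M) : a * a ∣ a := (hM a a).elim id id
  rcases hM x y with hx | hy
  · obtain ⟨k, hk, hkx⟩ := exists_pow_mul_eq_self_of_mul_self_dvd (mul_self_dvd (x * y)) hx
    exact ⟨k, hk, .inl hkx⟩
  · obtain ⟨w, hw⟩ : x * y * (x * y) ∣ y := (mul_self_dvd (x * y)).trans hy
    have hsandwich : x * (y * x) * (y * w) = y := by simpa only [mul_assoc] using hw.symm
    have hyx : y * x ∣ y := mul_dvd_self_of_mul_mul_eq_self hsandwich
    obtain ⟨k, hk, hky⟩ := exists_pow_mul_eq_self_of_mul_self_dvd (mul_self_dvd (y * x)) hyx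
    exact ⟨k, hk, .inr hky⟩

end Periodic

theorem rIdeal_subset_rIdeal_iff_dvd {M : Type} [Monoid M] {a b : M} :
    rIdeal M a ⊆ rIdeal M b ↔ b ∣ a := by
  refine ⟨fun h ↦ h ⟨1, (mul_one a).symm⟩, ?_⟩
  rintro hba _ ⟨y, rfl⟩
  exact hba.mul_right y

/-- Let `M` be a finite monoid such that for all `x,y ∈ M`, either `xM ⊆ (xy)M` or
`yM ⊆ (xy)M`. Then for all `x,y ∈ M` there exists `k ≥ 1` such that
`(x·y)^k·x = x` or `(y·x)^k·y = y`. -/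
theorem stmt5 (M : Type) [Monoid M] [Fintype M]
    (hM : ∀ x y : M, rIdeal M x ⊆ rIdeal M (x * y) ∨ rIdeal M y ⊆ rIdeal M (x * y))
    (x y : M) :
    ∃ k : ℕ, 1 ≤ k ∧ ((x * y) ^ k * x = x ∨ (y * x) ^ k * y = y) := by
  simp only [rIdeal_subset_rIdeal_iff_dvd] at hM
  exact stmt5_general hM x y
end
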